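/- arXiv:math-ph/0701034 — 2 statements merged into one kernel-verified Lean document; each statement's English description precedes it below -/
import Mathlib

section
/- Let A = diag(a₁,…,a_n) be a diagonal matrix with indeterminate (or positive real) entries and B an antisymmetric n×n matrix. Then det(A+B) = Σ_{I ⊆ {1,…,n}, n-|I| even} (∏_{i∈I} a_i) · Pf(B_{Î})², where B_{Î} is the matrix obtained from B by deleting the rows and columns indexed by I. -/
open Matrix

/-- The Pfaffian of an `m×m` real matrix (meaningful for antisymmetric `M` with `m` even),
given by the standard sum over permutations normalized by `2^(m/2) (m/2)!`.
By convention the Pfaffian of the empty matrix is `1`. -/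
noncomputable def pf {m : ℕ} (M : Matrix (Fin m) (Fin m) ℝ) : ℝ :=
  (1 / (2 ^ (m / 2) * ((m / 2).factorial : ℝ))) *
    ∑ σ : Equiv.Perm (Fin m), ((Equiv.Perm.sign σ : ℤ) : ℝ) *
      ∏ i : Fin (m / 2),
        M (σ ⟨2 * i.val, by have := i.isLt; omega⟩)
          (σ ⟨2 * i.val + 1, by have := i.isLt; omega⟩)


namespace PfAux

open Finset Equiv

abbrev N (k : ℕ) := Fin k × Fin 2

noncomputable def ps {k : ℕ} (M : Matrix (N k) (N k) ℝ) : ℝ :=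
  ∑ σ : Perm (N k), ((Perm.sign σ : ℤ) : ℝ) * ∏ i : Fin k, M (σ (i, 0)) (σ (i, 1))

def J (k : ℕ) : Matrix (N k) (N k) ℝ :=
  Matrix.of fun p q => if p.1 = q.1 then (!![0, 1; -1, 0] : Matrix (Fin 2) (Fin 2) ℝ) p.2 q.2 else 0

lemma sum_sign {k : ℕ} (C : Matrix (N k) (N k) ℝ) (f : N k → N k) :
    (∑ σ : Perm (N k), ((Perm.sign σ : ℤ) : ℝ) * ∏ x, C (σ x) (f x)) = (C.submatrix id f).det := by
  rw [Matrix.det_apply']; rfl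

lemma ps_congr {k : ℕ} (C M : Matrix (N k) (N k) ℝ) :
    ps (C * M * Cᵀ) = C.det * ps M := by
  have h1 : ∀ σ : Perm (N k), ∏ i : Fin k, (C * M * Cᵀ) (σ (i, 0)) (σ (i, 1)) =
      ∑ f : N k → N k, (∏ i : Fin k, M (f (i, 0)) (f (i, 1))) * ∏ x, C (σ x) (f x) := by
    intro σ
    have h2 : ∀ x y, (C * M * Cᵀ) x y = ∑ q : N k × N k, M q.1 q.2 * (C x q.1 * C y q.2) := by
      intro x y
      rw [Matrix.mul_apply, Fintype.sum_prod_type_right (f := fun q : N k × N k => M q.1 q.2 * (C x q.1 * C y q.2))]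
      apply Finset.sum_congr rfl
      intro j _
      rw [Matrix.mul_apply, Finset.sum_mul]
      apply Finset.sum_congr rfl
      intro i _
      rw [Matrix.transpose_apply]; ring
    simp_rw [h2]
    rw [Fintype.prod_sum]
    symm
    refine Fintype.sum_equiv ((Equiv.curry (Fin k) (Fin 2) (N k)).trans
      (Equiv.piCongrRight fun _ => finTwoArrowEquiv (N k))) _ _ ?_
    intro f
    rw [Finset.prod_mul_distrib, Fintype.prod_prod_type]
    simp [Fin.prod_univ_two, finTwoArrowEquiv]
  unfold ps
  simp_rw [h1, Finset.mul_sum]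
  rw [Finset.sum_comm]
  symm
  refine Fintype.sum_of_injective (fun σ : Perm (N k) => (σ : N k → N k)) DFunLike.coe_injective _ _ ?_ ?_
  · intro f hf
    have : ¬ Function.Injective f := by
      intro hi
      exact hf ⟨Equiv.ofBijective f (Finite.injective_iff_bijective.1 hi), rfl⟩
    have h0 : (C.submatrix id f).det = 0 := by
      rw [Function.Injective] at this
      push Not at this
      obtain ⟨a, b, hab, hne⟩ := this
      exact Matrix.det_zero_of_column_eq hne (fun x => by simp [hab])
    rw [← sum_sign] at h0
    simp_rw [mul_left_comm _ (∏ i : Fin k, M (f (i, 0)) (f (i, 1))) _]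
    rw [← Finset.mul_sum, h0, mul_zero]
  · intro τ
    simp_rw [mul_left_comm _ (∏ i : Fin k, M (τ (i, 0)) (τ (i, 1))) _]
    rw [← Finset.mul_sum, sum_sign, Matrix.det_permute']
    ring

lemma det_J (k : ℕ) : (J k).det = 1 := by
  have : J k = (Matrix.blockDiagonal (fun _ : Fin k => (!![0, 1; -1, 0] : Matrix (Fin 2) (Fin 2) ℝ))).submatrix
      (Equiv.prodComm _ _) (Equiv.prodComm _ _) := by
    ext ⟨a, b⟩ ⟨c, d⟩
    simp [J, Matrix.blockDiagonal_apply]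
  rw [this, Matrix.det_submatrix_equiv_self, Matrix.det_blockDiagonal]
  simp [Matrix.det_fin_two]

def wr {k : ℕ} (t : Perm (Fin k) × (Fin k → Perm (Fin 2))) : Perm (N k) :=
  (Equiv.prodCongrLeft fun _ : Fin 2 => t.1) * (Equiv.prodCongrRight t.2)

lemma wr_apply {k : ℕ} (t : Perm (Fin k) × (Fin k → Perm (Fin 2))) (i : Fin k) (j : Fin 2) :
    wr t (i, j) = (t.1 i, t.2 i j) := rfl

lemma ps_J (k : ℕ) : ps (J k) = 2 ^ k * (k.factorial : ℝ) := by
  have h : ∑ t : Perm (Fin k) × (Fin k → Perm (Fin 2)), (1 : ℝ) = ps (J k) := by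
    unfold ps
    refine Fintype.sum_of_injective wr ?_ _ _ ?_ ?_
    · intro s t hst
      have h : ∀ i j, (s.1 i, s.2 i j) = (t.1 i, t.2 i j) := fun i j => by
        rw [← wr_apply, ← wr_apply, hst]
      refine Prod.ext (Equiv.ext fun i => congrArg Prod.fst (h i 0)) ?_
      exact funext fun i => Equiv.ext fun j => congrArg Prod.snd (h i j)
    · intro σ hσ
      by_contra hne
      have hne' := right_ne_zero_of_mul hne
      rw [Finset.prod_ne_zero_iff] at hne'
      have h1 : ∀ i, (σ (i, 0)).1 = (σ (i, 1)).1 := by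
        intro i
        have := hne' i (Finset.mem_univ _)
        by_contra h
        exact this (by simp [J, h])
      have h1' : ∀ i j, (σ (i, j)).1 = (σ (i, 0)).1 := by
        intro i j
        fin_cases j
        · rfl
        · exact (h1 i).symm
      have h2 : ∀ i, Function.Injective fun j => (σ (i, j)).2 := by
        intro i j j' hj
        have : σ (i, j) = σ (i, j') := Prod.ext ((h1' i j).trans (h1' i j').symm) hj
        exact congrArg Prod.snd (σ.injective this)
      have h3 : Function.Surjective fun i => (σ (i, 0)).1 := by
        intro a
        refine ⟨(σ.symm (a, 0)).1, ?_⟩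
        have := h1' (σ.symm (a, 0)).1 (σ.symm (a, 0)).2
        simp only [Prod.mk.eta, Equiv.apply_symm_apply] at this
        exact this.symm
      refine hσ ⟨(Equiv.ofBijective _ (Finite.surjective_iff_bijective.1 h3),
        fun i => Equiv.ofBijective _ (Finite.injective_iff_bijective.1 (h2 i))), ?_⟩
      ext1 ⟨i, j⟩
      rw [wr_apply]
      exact Prod.ext (h1' i j).symm rfl
    · intro t
      have hs : Perm.sign (wr t) = ∏ i, Perm.sign (t.2 i) := by
        rw [wr, Perm.sign_mul, Perm.sign_prodCongrLeft, Perm.sign_prodCongrRight]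
        simp
      rw [hs]
      push_cast
      rw [← Finset.prod_mul_distrib]
      symm
      refine Finset.prod_eq_one fun i _ => ?_
      rw [wr_apply, wr_apply]
      simp only [J, Matrix.of_apply, if_true]
      generalize t.2 i = e
      revert e
      have : ∀ e : Perm (Fin 2), e = 1 ∨ e = Equiv.swap 0 1 := by decide
      intro e
      rcases this e with rfl | rfl <;> simp
  rw [← h]
  simp [Fintype.card_perm, Fintype.card_prod, mul_comm]

lemma exists_fg {ι : Type*} [Fintype ι] [DecidableEq ι] (k : ℕ) :
    ∀ (S : Finset ι) (M : Matrix ι ι ℝ), S.card ≤ 2 * k → (∀ x y, M x y = - M y x) →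
      (∀ x y, x ∉ S → M x y = 0) →
      ∃ f g : Fin k → ι → ℝ, ∀ x y, M x y = ∑ i, (f i x * g i y - g i x * f i y) := by
  induction k with
  | zero =>
    intro S M hS hM hMS
    have : S = ∅ := by simpa using hS
    subst this
    exact ⟨0, 0, fun x y => by simp [hMS x y]⟩
  | succ k ih =>
    intro S M hS hM hMS
    by_cases h0 : ∀ x y, M x y = 0
    · exact ⟨0, 0, fun x y => by simp [h0]⟩
    push Not at h0
    obtain ⟨a, b, hab⟩ := h0
    have hd : ∀ x, M x x = 0 := fun x => by linarith [hM x x]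
    have haS : a ∈ S := by by_contra h; exact hab (hMS a b h)
    have hbS : b ∈ S := by
      by_contra h; exact hab (by rw [hM, hMS b a h, neg_zero])
    have hne : a ≠ b := by rintro rfl; exact hab (hd a)
    obtain ⟨f, g, hfg⟩ := ih ((S.erase a).erase b)
      (fun x y => M x y - (M a x / M a b * M b y - M b x * (M a y / M a b))) (by
        rw [Finset.card_erase_of_mem (by simp [hbS, hne.symm]), Finset.card_erase_of_mem haS]
        omega) (by
        intro x y
        rw [hM x y]; ring) (by
        intro x y hx
        by_cases hxb : x = b
        · subst hxb; simp [hd, hab]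
        by_cases hxa : x = a
        · subst hxa; rw [hd, hM b x]; field_simp; ring
        have hxS : x ∉ S := by simpa [hxb, hxa] using hx
        simp [hMS x _ hxS, hM _ x])
    refine ⟨Fin.cons (fun x => M a x / M a b) f, Fin.cons (fun x => M b x) g, fun x y => ?_⟩
    rw [Fin.sum_univ_succ]
    simp only [Fin.cons_zero, Fin.cons_succ]
    rw [← hfg]; ring

lemma det_eq_ps_sq {k : ℕ} (M : Matrix (N k) (N k) ℝ) (hM : Mᵀ = -M) :
    M.det = (1 / (2 ^ k * (k.factorial : ℝ)) * ps M) ^ 2 := by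
  obtain ⟨f, g, hfg⟩ := exists_fg k Finset.univ M (by simp [mul_comm])
    (fun x y => by have := congrFun (congrFun hM y) x; simpa using this) (by simp)
  obtain ⟨C, hC⟩ : ∃ C : Matrix (N k) (N k) ℝ, M = C * J k * Cᵀ := by
    refine ⟨Matrix.of fun x p => if p.2 = 0 then f p.1 x else g p.1 x, ?_⟩
    ext x y
    rw [hfg]
    simp only [Matrix.mul_apply, J, Matrix.of_apply, Matrix.transpose_apply,
      Fintype.sum_prod_type, Fin.sum_univ_two]
    refine Finset.sum_congr rfl fun i _ => ?_
    simp
    ring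
  have hk : (2 ^ k * (k.factorial : ℝ)) ≠ 0 := by positivity
  rw [hC, ps_congr, ps_J, Matrix.det_mul, Matrix.det_mul, Matrix.det_transpose, det_J]
  field_simp

def eqv {m : ℕ} (hm : Even m) : N (m / 2) ≃ Fin m where
  toFun p := ⟨2 * p.1.val + p.2.val, by
    have := p.1.isLt; have := p.2.isLt; omega⟩
  invFun x := (⟨x.val / 2, by obtain ⟨r, rfl⟩ := hm; have := x.isLt; omega⟩,
    ⟨x.val % 2, by omega⟩)
  left_inv := by
    rintro ⟨i, j⟩
    have := j.isLt
    ext <;> simp <;> omega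
  right_inv := by
    intro x
    ext
    simp
    omega

lemma det_eq_pf_sq {m : ℕ} (hm : Even m) (M : Matrix (Fin m) (Fin m) ℝ) (hM : Mᵀ = -M) :
    M.det = pf M ^ 2 := by
  rw [← Matrix.det_submatrix_equiv_self (eqv hm) M, det_eq_ps_sq]
  · congr 2
    unfold ps
    refine Fintype.sum_equiv (eqv hm).permCongr _ _ fun σ => ?_
    rw [Perm.sign_permCongr]
    congr 1
    refine Finset.prod_congr rfl fun i _ => ?_
    have e0 : (⟨2 * i.val, by have := i.isLt; omega⟩ : Fin m) = eqv hm (i, 0) := rfl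
    have e1 : (⟨2 * i.val + 1, by have := i.isLt; omega⟩ : Fin m) = eqv hm (i, 1) := rfl
    rw [e0, e1]
    simp [Equiv.permCongr_apply]
  · rw [Matrix.transpose_submatrix, hM]; rfl

lemma det_odd {m : ℕ} (hm : ¬ Even m) (M : Matrix (Fin m) (Fin m) ℝ) (hM : Mᵀ = -M) :
    M.det = 0 := by
  have h := Matrix.det_transpose M
  rw [hM, Matrix.det_neg, Fintype.card_fin, (Nat.not_even_iff_odd.1 hm).neg_one_pow] at h
  linarith

lemma det_piece {n : ℕ} (a : Fin n → ℝ) (B : Matrix (Fin n) (Fin n) ℝ) (I : Finset (Fin n)) :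
    Matrix.det (I.piecewise (Matrix.diagonal a) B : Matrix (Fin n) (Fin n) ℝ) =
      (∏ i ∈ I, a i) *
      (B.submatrix (fun i => ((Iᶜ.orderIsoOfFin rfl) i : Fin n))
              (fun i => ((Iᶜ.orderIsoOfFin rfl) i : Fin n))).det := by
  set P : Matrix (Fin n) (Fin n) ℝ := I.piecewise (Matrix.diagonal a) B with hP
  have hin : ∀ i ∈ I, ∀ j, P i j = Matrix.diagonal a i j := fun i hi j => by
    exact congrFun (Finset.piecewise_eq_of_mem I (fun i => Matrix.diagonal a i) (fun i => B i) hi) j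
  have hout : ∀ i ∉ I, ∀ j, P i j = B i j := fun i hi j => by
    exact congrFun (Finset.piecewise_eq_of_notMem I (fun i => Matrix.diagonal a i) (fun i => B i) hi) j
  rw [Matrix.twoBlockTriangular_det' P (fun i => i ∈ I)]
  · congr 1
    · have : P.toSquareBlockProp (fun i => i ∈ I) = Matrix.diagonal fun i : {i // i ∈ I} => a i := by
        ext i j
        rw [Matrix.toSquareBlockProp_def, Matrix.of_apply, hin i i.2, Matrix.diagonal_apply,
          Matrix.diagonal_apply]
        simp only [Subtype.ext_iff]
      rw [this]
      refine (@Matrix.det_diagonal {i // i ∈ I} _ (_) ℝ _ _).trans ?_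
      exact (@Finset.prod_subtype _ _ _ _ (_) I (fun _ => Iff.rfl) a).symm
    · let e : Fin (Iᶜ.card) ≃ {i // ¬ i ∈ I} :=
        (Iᶜ.orderIsoOfFin rfl).toEquiv.trans (Equiv.subtypeEquivRight fun x => by simp)
      rw [← Matrix.det_submatrix_equiv_self e]
      congr 1
      ext i j
      exact hout _ (e i).2 _
  · intro i hi j hj
    rw [hin i hi, Matrix.diagonal_apply_ne]
    rintro rfl
    exact hj hi

end PfAux

/-- For `A = diag a` and `B` antisymmetric,
`det (A + B) = Σ_{I, n-|I| even} (∏_{i∈I} a i) · Pf(B_Î)²`, where `B_Î` is obtained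
from `B` by deleting the rows and columns indexed by `I`. -/
theorem det_diagonal_add_antisym_pfaffian_expansion {n : ℕ}
    (a : Fin n → ℝ) (B : Matrix (Fin n) (Fin n) ℝ) (hB : Bᵀ = -B) :
    (Matrix.diagonal a + B).det =
      ∑ I ∈ Finset.univ.filter (fun I : Finset (Fin n) => Even (n - I.card)),
        (∏ i ∈ I, a i) *
          (pf (B.submatrix (fun i => ((Iᶜ.orderIsoOfFin rfl) i : Fin n))
              (fun i => ((Iᶜ.orderIsoOfFin rfl) i : Fin n)))) ^ 2 := by
  have h1 : (Matrix.diagonal a + B).det = ∑ I : Finset (Fin n),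
      Matrix.det (I.piecewise (Matrix.diagonal a) B : Matrix (Fin n) (Fin n) ℝ) :=
    (Matrix.detRowAlternating (R := ℝ) (n := Fin n)).toMultilinearMap.map_add_univ
      (Matrix.diagonal a) B
  rw [h1, Finset.sum_filter]
  refine Finset.sum_congr rfl fun I _ => ?_
  rw [PfAux.det_piece]
  have hc : Iᶜ.card = n - I.card := by rw [Finset.card_compl, Fintype.card_fin]
  have hT : ∀ f : Fin (Iᶜ.card) → Fin n, (B.submatrix f f)ᵀ = -(B.submatrix f f) := by
    intro f
    rw [Matrix.transpose_submatrix, hB]; rfl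
  split_ifs with h
  · rw [PfAux.det_eq_pf_sq (hc ▸ h) _ (hT _)]
  · rw [PfAux.det_odd (hc ▸ h) _ (hT _), mul_zero]
end

section
/- Let A be a diagonal matrix with nonnegative real entries and B a real antisymmetric matrix of the same size n, with n even. Then det(A+B) ≥ Pf(B)², and in particular det(A+B) ≥ 0. -/
open Matrix

/-- If `diagonal a + B` kills a vector and `a > 0`, the vector vanishes. -/
lemma det_ne_zero_aux {n : ℕ} (a : Fin n → ℝ) (ha : ∀ i, 0 < a i)
    (B : Matrix (Fin n) (Fin n) ℝ) (hB : Bᵀ = -B) :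
    (Matrix.diagonal a + B).det ≠ 0 := by
  intro h
  obtain ⟨v, hv, hv0⟩ := Matrix.exists_mulVec_eq_zero_iff.2 h
  have h1 : v ⬝ᵥ (B *ᵥ v) = 0 := by
    have h2 : v ⬝ᵥ (B *ᵥ v) = v ⬝ᵥ (Bᵀ *ᵥ v) := by
      rw [Matrix.mulVec_transpose, Matrix.dotProduct_mulVec, dotProduct_comm]
    rw [hB, Matrix.neg_mulVec, dotProduct_neg] at h2
    linarith
  have h3 : v ⬝ᵥ ((Matrix.diagonal a + B) *ᵥ v) = 0 := by rw [hv0]; simp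
  rw [Matrix.add_mulVec, dotProduct_add, h1, add_zero] at h3
  have h4 : ∑ i, a i * (v i) ^ 2 = 0 := by
    rw [← h3]
    simp only [dotProduct, Matrix.mulVec_diagonal]
    exact Finset.sum_congr rfl fun i _ => by ring
  rw [Finset.sum_eq_zero_iff_of_nonneg
    (fun i _ => mul_nonneg (ha i).le (sq_nonneg _))] at h4
  apply hv
  funext i
  have h5 := h4 i (Finset.mem_univ i)
  have h6 := (ha i).ne'
  simpa [h6] using h5

lemma det_pos_aux {n : ℕ} (a : Fin n → ℝ) (ha : ∀ i, 0 < a i)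
    (B : Matrix (Fin n) (Fin n) ℝ) (hB : Bᵀ = -B) :
    0 < (Matrix.diagonal a + B).det := by
  by_contra hneg
  push Not at hneg
  have hc : Continuous (fun s : ℝ => (Matrix.diagonal a + s • B).det) := by
    apply Continuous.matrix_det
    fun_prop
  have h0 : 0 < (Matrix.diagonal a + (0 : ℝ) • B).det := by
    rw [zero_smul, add_zero, Matrix.det_diagonal]
    exact Finset.prod_pos fun i _ => ha i
  have h1 : (Matrix.diagonal a + (1 : ℝ) • B).det ≤ 0 := by rwa [one_smul]
  obtain ⟨s, _, hs⟩ := intermediate_value_Icc' (zero_le_one : (0 : ℝ) ≤ 1)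
    hc.continuousOn ⟨h1, h0.le⟩
  exact det_ne_zero_aux a ha (s • B) (by rw [Matrix.transpose_smul, hB, smul_neg]) hs

lemma det_nonneg_aux {n : ℕ} (a : Fin n → ℝ) (ha : ∀ i, 0 ≤ a i)
    (B : Matrix (Fin n) (Fin n) ℝ) (hB : Bᵀ = -B) :
    0 ≤ (Matrix.diagonal a + B).det := by
  have hc : Continuous (fun s : ℝ => (Matrix.diagonal (fun i => a i + s) + B).det) := by
    apply Continuous.matrix_det
    refine Continuous.add (Continuous.matrix_diagonal ?_) continuous_const
    fun_prop
  have ht := (hc.tendsto 0).mono_left (nhdsWithin_le_nhds (s := Set.Ioi (0 : ℝ)))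
  simp only [add_zero] at ht
  refine ge_of_tendsto ht ?_
  filter_upwards [self_mem_nhdsWithin] with s hs
  exact (det_pos_aux _ (fun i => add_pos_of_nonneg_of_pos (ha i) hs) B hB).le

/-- Dependence on a single diagonal entry is affine. -/
lemma det_update_aux {n : ℕ} (a : Fin n → ℝ) (B : Matrix (Fin n) (Fin n) ℝ) (i : Fin n) :
    ∃ d : ℝ, ∀ c, (Matrix.diagonal (Function.update a i c) + B).det =
      (Matrix.diagonal (Function.update a i 0) + B).det + c * d := by
  refine ⟨((Matrix.diagonal (Function.update a i 0) + B).updateRow i (Pi.single i 1)).det, ?_⟩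
  intro c
  have h : Matrix.diagonal (Function.update a i c) + B =
      (Matrix.diagonal (Function.update a i 0) + B).updateRow i
        ((Matrix.diagonal (Function.update a i 0) + B) i + c • Pi.single i 1) := by
    ext x y
    by_cases hx : x = i
    · subst hx
      by_cases hy : x = y
      · subst hy; simp; ring
      · simp [hy, Ne.symm hy]
    · by_cases hy : x = y
      · subst hy; simp [hx]
      · simp [hx, hy]
  rw [h, Matrix.det_updateRow_add, Matrix.det_updateRow_smul, Matrix.updateRow_eq_self]

lemma det_update_le {n : ℕ} (a : Fin n → ℝ) (ha : ∀ i, 0 ≤ a i)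
    (B : Matrix (Fin n) (Fin n) ℝ) (hB : Bᵀ = -B) (i : Fin n) :
    (Matrix.diagonal (Function.update a i 0) + B).det ≤ (Matrix.diagonal a + B).det := by
  obtain ⟨d, hd⟩ := det_update_aux a B i
  have hpos : ∀ c, 0 ≤ c → 0 ≤ (Matrix.diagonal (Function.update a i 0) + B).det + c * d := by
    intro c hc
    rw [← hd c]
    refine det_nonneg_aux _ (fun j => ?_) B hB
    by_cases hj : j = i
    · subst hj; simpa using hc
    · simpa [hj] using ha j
  have hd0 : 0 ≤ d := by
    by_contra hneg
    push Not at hneg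
    set D := (Matrix.diagonal (Function.update a i 0) + B).det
    have hD : 0 ≤ D := by simpa using hpos 0 le_rfl
    have h1 := hpos ((D + 1) / (-d)) (by apply div_nonneg <;> linarith)
    have h2 : (D + 1) / (-d) * d = -(D + 1) := by
      have := hneg.ne
      field_simp
    linarith
  have h := hd (a i)
  rw [Function.update_eq_self] at h
  rw [h]
  have := mul_nonneg (ha i) hd0
  linarith

lemma det_le_aux {n : ℕ} (a : Fin n → ℝ) (ha : ∀ i, 0 ≤ a i)
    (B : Matrix (Fin n) (Fin n) ℝ) (hB : Bᵀ = -B) :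
    B.det ≤ (Matrix.diagonal a + B).det := by
  have key : ∀ S : Finset (Fin n),
      (Matrix.diagonal (fun i => if i ∈ S then 0 else a i) + B).det
        ≤ (Matrix.diagonal a + B).det := by
    intro S
    induction S using Finset.induction_on with
    | empty => simp
    | insert j S hj ih =>
      refine le_trans ?_ ih
      have h := det_update_le (fun i => if i ∈ S then 0 else a i)
        (fun i => by split_ifs <;> simp [ha]) B hB j
      have he : Function.update (fun i => if i ∈ S then 0 else a i) j 0 =
          fun i => if i ∈ insert j S then 0 else a i := by
        funext i
        by_cases hi : i = j
        · subst hi; simp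
        · simp [hi]
      rwa [he] at h
  have h := key Finset.univ
  have h0 : Matrix.diagonal (fun _ : Fin n => (0 : ℝ)) = 0 := Matrix.diagonal_zero
  simpa [h0] using h

/-- Decomposition of an antisymmetric matrix as a sum of elementary ones. -/
lemma antisym_decomp {ι : Type*} [DecidableEq ι] (k : ℕ) :
    ∀ (S : Finset ι) (B : Matrix ι ι ℝ), (∀ i j, B i j = - B j i) →
      (∀ i j, i ∉ S → B i j = 0) → S.card ≤ 2 * k →
      ∃ u w : Fin k → ι → ℝ, ∀ i j, B i j = ∑ l, (u l i * w l j - w l i * u l j) := by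
  induction k with
  | zero =>
    intro S B _ hS hc
    have hS0 : S = ∅ := by rw [← Finset.card_eq_zero]; omega
    refine ⟨fun _ _ => 0, fun _ _ => 0, fun i j => ?_⟩
    simp [hS i j (by simp [hS0])]
  | succ k ih =>
    intro S B hB hS hc
    by_cases h0 : ∀ i j, B i j = 0
    · exact ⟨fun _ _ => 0, fun _ _ => 0, fun i j => by simp [h0 i j]⟩
    push Not at h0
    obtain ⟨p, q, hb⟩ := h0
    have hdiag : ∀ i, B i i = 0 := fun i => by have := hB i i; linarith
    have hpq : p ≠ q := by
      rintro rfl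
      exact hb (hdiag p)
    have hp : p ∈ S := by
      by_contra h
      exact hb (hS p q h)
    have hq : q ∈ S := by
      by_contra h
      apply hb
      rw [hB, hS q p h, neg_zero]
    have hS' : ∀ i j, i ∉ S → B j i = 0 := fun i j h => by rw [hB, hS i j h, neg_zero]
    obtain ⟨u, w, huw⟩ := ih ((S.erase p).erase q)
      (fun i j => B i j - (B i q / B p q * B p j - B p i * (B j q / B p q)))
      (fun i j => by rw [hB i j]; ring)
      (fun i j hi => by
        by_cases hip : i = p
        · subst hip
          rw [hdiag i]; field_simp; ring
        by_cases hiq : i = q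
        · subst hiq
          rw [hdiag i, hB i j]; field_simp; ring
        have hiS : i ∉ S := by
          intro h
          exact hi (by simp [hip, hiq, h])
        rw [hS i j hiS, hS i q hiS, hS' i p hiS]; ring)
      (by
        rw [Finset.card_erase_of_mem (by simp [hq, hpq.symm]), Finset.card_erase_of_mem hp]
        omega)
    refine ⟨Fin.cons (fun i => B i q / B p q) u, Fin.cons (fun i => B p i) w, fun i j => ?_⟩
    rw [Fin.sum_univ_succ]
    simp only [Fin.cons_zero, Fin.cons_succ]
    rw [← huw i j]
    ring

/-- Unnormalized Pfaffian attached to a pairing of the index type. -/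
noncomputable def pfs {ι κ : Type*} [Fintype ι] [DecidableEq ι] [Fintype κ]
    (e : κ × Fin 2 ≃ ι) (M : Matrix ι ι ℝ) : ℝ :=
  ∑ σ : Equiv.Perm ι, ((Equiv.Perm.sign σ : ℤ) : ℝ) *
    ∏ l : κ, M (σ (e (l, 0))) (σ (e (l, 1)))

/-- Functions on the index type as functions on pairs. -/
def pairFun {ι κ α : Type*} (e : κ × Fin 2 ≃ ι) : (ι → α) ≃ (κ → α × α) where
  toFun f := fun l => (f (e (l, 0)), f (e (l, 1)))
  invFun g := fun x => if (e.symm x).2 = 0 then (g (e.symm x).1).1 else (g (e.symm x).1).2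
  left_inv f := by
    funext x
    obtain ⟨⟨l, s⟩, rfl⟩ := e.surjective x
    fin_cases s <;> simp
  right_inv g := by
    funext l
    simp

lemma pfs_congr {ι κ : Type*} [Fintype ι] [DecidableEq ι] [Fintype κ] [DecidableEq κ]
    (e : κ × Fin 2 ≃ ι) (Q M : Matrix ι ι ℝ) :
    pfs e (Q * M * Qᵀ) = Q.det * pfs e M := by
  have h1 : ∀ x y, (Q * M * Qᵀ) x y = ∑ p : ι × ι, M p.1 p.2 * (Q x p.1 * Q y p.2) := by
    intro x y
    rw [Fintype.sum_prod_type_right]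
    simp only [Matrix.mul_apply, Matrix.transpose_apply, Finset.sum_mul]
    exact Finset.sum_congr rfl fun b _ => Finset.sum_congr rfl fun a _ => by ring
  have h2 : ∀ σ : Equiv.Perm ι, ∏ l : κ, (Q * M * Qᵀ) (σ (e (l, 0))) (σ (e (l, 1))) =
      ∑ f : ι → ι, (∏ l : κ, M (f (e (l, 0))) (f (e (l, 1)))) * ∏ x, Q (σ x) (f x) := by
    intro σ
    simp only [h1]
    rw [Finset.prod_univ_sum, Fintype.piFinset_univ]
    rw [← (pairFun (α := ι) e).sum_comp]
    refine Finset.sum_congr rfl fun f _ => ?_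
    rw [Finset.prod_mul_distrib]
    congr 1
    rw [← e.prod_comp, Fintype.prod_prod_type]
    simp [pairFun, Fin.prod_univ_two]
  have h3 : pfs e (Q * M * Qᵀ) = ∑ f : ι → ι,
      (∏ l : κ, M (f (e (l, 0))) (f (e (l, 1)))) * (Q.submatrix id f).det := by
    unfold pfs
    simp only [h2, Finset.mul_sum, Matrix.det_apply', Matrix.submatrix_apply, id]
    rw [Finset.sum_comm]
    exact Finset.sum_congr rfl fun f _ => Finset.sum_congr rfl fun σ _ => by ring
  rw [h3]
  have h4 : ∑ f : ι → ι,
      (∏ l : κ, M (f (e (l, 0))) (f (e (l, 1)))) * (Q.submatrix id f).det =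
      ∑ f : ι → ι with Function.Bijective f,
      (∏ l : κ, M (f (e (l, 0))) (f (e (l, 1)))) * (Q.submatrix id f).det := by
    refine (Finset.sum_subset (Finset.filter_subset _ _) fun f _ hf => ?_).symm
    have hf' : ¬ Function.Injective f := by
      intro hi
      exact hf (Finset.mem_filter.2 ⟨Finset.mem_univ _, Finite.injective_iff_bijective.1 hi⟩)
    unfold Function.Injective at hf'
    push Not at hf'
    obtain ⟨i, j, hij, hne⟩ := hf'
    rw [Matrix.det_zero_of_column_eq hne (by intro x; simp [hij]), mul_zero]
  rw [h4]
  unfold pfs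
  rw [Finset.mul_sum]
  symm
  refine Finset.sum_bij (fun (σ : Equiv.Perm ι) _ => (σ : ι → ι)) (fun σ _ => ?_)
    (fun _ _ _ _ h => Equiv.coe_fn_injective h) (fun f hf => ?_) (fun σ _ => ?_)
  · simp
  · exact ⟨Equiv.ofBijective f (Finset.mem_filter.1 hf).2, Finset.mem_univ _, rfl⟩
  · rw [Matrix.det_permute']
    ring

/-- The standard symplectic matrix for a pairing. -/
noncomputable def stdJ {ι κ : Type*} [DecidableEq κ] (e : κ × Fin 2 ≃ ι) : Matrix ι ι ℝ :=
  Matrix.of fun x y => if (e.symm x).1 = (e.symm y).1 then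
    (!![0, 1; -1, 0] : Matrix (Fin 2) (Fin 2) ℝ) (e.symm x).2 (e.symm y).2 else 0

lemma stdJ_det {ι κ : Type*} [Fintype ι] [DecidableEq ι] [Fintype κ] [DecidableEq κ]
    (e : κ × Fin 2 ≃ ι) : (stdJ e).det = 1 := by
  have h : stdJ e = (Matrix.blockDiagonal
      (fun _ : κ => (!![0, 1; -1, 0] : Matrix (Fin 2) (Fin 2) ℝ))).submatrix
      ((e.symm.trans (Equiv.prodComm _ _))) ((e.symm.trans (Equiv.prodComm _ _))) := by
    ext x y
    simp [stdJ, Matrix.blockDiagonal_apply]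
  rw [h, Matrix.det_submatrix_equiv_self, Matrix.det_blockDiagonal]
  simp [Matrix.det_fin_two]

lemma stdJ_abs {ι κ : Type*} [DecidableEq κ] (e : κ × Fin 2 ≃ ι) (x y : ι) :
    |stdJ e x y| ≤ 1 := by
  obtain ⟨⟨l, s⟩, rfl⟩ := e.surjective x
  obtain ⟨⟨m, t⟩, rfl⟩ := e.surjective y
  by_cases h : l = m <;> fin_cases s <;> fin_cases t <;> simp [stdJ, h]

lemma stdJ_ne {ι κ : Type*} [DecidableEq κ] (e : κ × Fin 2 ≃ ι) (x y : ι)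
    (h : stdJ e x y ≠ 0) :
    (e.symm x).1 = (e.symm y).1 ∧ (e.symm y).2 = (e.symm x).2 + 1 := by
  obtain ⟨⟨l, s⟩, rfl⟩ := e.surjective x
  obtain ⟨⟨m, t⟩, rfl⟩ := e.surjective y
  by_cases hl : l = m
  · fin_cases s <;> fin_cases t <;> simp_all [stdJ]
  · simp [stdJ, hl] at h

/-- Number of permutations compatible with the pairing. -/
lemma card_good {ι κ : Type*} [Fintype ι] [DecidableEq ι] [Fintype κ] [DecidableEq κ]
    (e : κ × Fin 2 ≃ ι) :
    Fintype.card {σ : Equiv.Perm ι // ∀ l, stdJ e (σ (e (l, 0))) (σ (e (l, 1))) ≠ 0} ≤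
      2 ^ Fintype.card κ * (Fintype.card κ).factorial := by
  have hinj : ∀ σ : {σ : Equiv.Perm ι // ∀ l, stdJ e (σ (e (l, 0))) (σ (e (l, 1))) ≠ 0},
      Function.Injective (fun l => (e.symm (σ.1 (e (l, 0)))).1) := by
    rintro ⟨σ, hσ⟩ l m hlm
    dsimp only at hlm
    obtain ⟨h1, h2⟩ := stdJ_ne e _ _ (hσ l)
    by_cases hs : (e.symm (σ (e (l, 0)))).2 = (e.symm (σ (e (m, 0)))).2
    · have := e.injective (σ.injective (e.symm.injective (Prod.ext hlm hs)))
      simpa using this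
    · have h3 : (e.symm (σ (e (l, 1)))).2 = (e.symm (σ (e (m, 0)))).2 := by
        rw [h2]
        generalize (e.symm (σ (e (l, 0)))).2 = s at *
        generalize (e.symm (σ (e (m, 0)))).2 = t at *
        revert hs
        revert s t
        clear * -
        intro s _ t
        fin_cases s <;> fin_cases t <;> simp
      have := e.injective (σ.injective (e.symm.injective (Prod.ext (h1.symm.trans hlm) h3)))
      simp at this
  have hcard : Fintype.card ((κ → Fin 2) × Equiv.Perm κ) =
      2 ^ Fintype.card κ * (Fintype.card κ).factorial := by
    simp [Fintype.card_perm]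
  rw [← hcard]
  refine Fintype.card_le_of_injective (fun σ => (fun l => (e.symm (σ.1 (e (l, 0)))).2,
    Equiv.ofBijective _ (Finite.injective_iff_bijective.1 (hinj σ)))) ?_
  rintro ⟨σ, hσ⟩ ⟨τ, hτ⟩ h
  simp only [Prod.mk.injEq] at h
  obtain ⟨h1, h2⟩ := h
  have h1' : ∀ l, (e.symm (σ (e (l, 0)))).2 = (e.symm (τ (e (l, 0)))).2 := fun l => congrFun h1 l
  have h2' : ∀ l, (e.symm (σ (e (l, 0)))).1 = (e.symm (τ (e (l, 0)))).1 :=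
    fun l => congrArg (fun f : Equiv.Perm κ => f l) h2
  apply Subtype.ext
  apply Equiv.ext
  intro x
  obtain ⟨⟨l, s⟩, rfl⟩ := e.surjective x
  apply e.symm.injective
  obtain ⟨a1, a2⟩ := stdJ_ne e _ _ (hσ l)
  obtain ⟨b1, b2⟩ := stdJ_ne e _ _ (hτ l)
  fin_cases s
  · exact Prod.ext (h2' l) (h1' l)
  · refine Prod.ext ?_ ?_
    · exact a1.symm.trans ((h2' l).trans b1)
    · exact a2.trans ((congrArg (· + 1) (h1' l)).trans b2.symm)

lemma pfs_stdJ_le {ι κ : Type*} [Fintype ι] [DecidableEq ι] [Fintype κ] [DecidableEq κ]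
    (e : κ × Fin 2 ≃ ι) :
    |pfs e (stdJ e)| ≤ 2 ^ Fintype.card κ * ((Fintype.card κ).factorial : ℝ) := by
  unfold pfs
  refine (Finset.abs_sum_le_sum_abs _ _).trans ?_
  have h : ∀ σ : Equiv.Perm ι, |((Equiv.Perm.sign σ : ℤ) : ℝ) *
      ∏ l : κ, stdJ e (σ (e (l, 0))) (σ (e (l, 1)))| ≤
      if ∀ l, stdJ e (σ (e (l, 0))) (σ (e (l, 1))) ≠ 0 then 1 else 0 := by
    intro σ
    have hs : |((Equiv.Perm.sign σ : ℤ) : ℝ)| = 1 := by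
      rcases Int.units_eq_one_or (Equiv.Perm.sign σ) with h | h <;> simp [h]
    rw [abs_mul, hs, one_mul, Finset.abs_prod]
    split_ifs with hg
    · exact Finset.prod_le_one (fun _ _ => abs_nonneg _) (fun _ _ => stdJ_abs e _ _)
    · push Not at hg
      obtain ⟨l, hl⟩ := hg
      exact (Finset.prod_eq_zero (Finset.mem_univ l) (by rw [hl, abs_zero])).le
  refine (Finset.sum_le_sum fun σ _ => h σ).trans ?_
  rw [Finset.sum_boole, ← Fintype.card_subtype]
  exact_mod_cast card_good e

lemma pfs_sq_le {ι κ : Type*} [Fintype ι] [DecidableEq ι] [Fintype κ] [DecidableEq κ]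
    (e : κ × Fin 2 ≃ ι) (B : Matrix ι ι ℝ) (hB : Bᵀ = -B) :
    (1 / (2 ^ Fintype.card κ * ((Fintype.card κ).factorial : ℝ)) * pfs e B) ^ 2 ≤ B.det := by
  have hcard : Fintype.card ι = 2 * Fintype.card κ := by
    rw [← Fintype.card_congr e]; simp [mul_comm]
  have hB' : ∀ i j, B i j = - B j i := fun i j => by
    have := congrFun (congrFun hB j) i
    simpa using this
  obtain ⟨u, w, huw⟩ := antisym_decomp (Fintype.card κ) Finset.univ B hB' (by simp)
    (by simp [hcard])
  let c := Fintype.equivFin κ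
  let Q : Matrix ι ι ℝ := Matrix.of fun i x =>
    if (e.symm x).2 = 0 then u (c (e.symm x).1) i else w (c (e.symm x).1) i
  have hQ : B = Q * stdJ e * Qᵀ := by
    ext i j
    rw [huw i j, ← c.sum_comp]
    simp only [Matrix.mul_apply, Matrix.transpose_apply]
    rw [← e.sum_comp, Fintype.sum_prod_type]
    refine Finset.sum_congr rfl fun l _ => ?_
    rw [Fin.sum_univ_two, ← e.sum_comp, ← e.sum_comp, Fintype.sum_prod_type,
      Fintype.sum_prod_type]
    simp [Q, stdJ, Fin.sum_univ_two, Finset.sum_ite_eq]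
    ring
  have hdet : B.det = Q.det ^ 2 := by
    rw [hQ, Matrix.det_mul, Matrix.det_mul, Matrix.det_transpose, stdJ_det]; ring
  rw [hdet]
  rw [show pfs e B = Q.det * pfs e (stdJ e) by rw [hQ]; exact pfs_congr e Q _]
  have hN : (0 : ℝ) < 2 ^ Fintype.card κ * ((Fintype.card κ).factorial : ℝ) := by positivity
  have hle := pfs_stdJ_le e
  set N := (2 : ℝ) ^ Fintype.card κ * ((Fintype.card κ).factorial : ℝ)
  have h1 : (1 / N * pfs e (stdJ e)) ^ 2 ≤ 1 := by
    rw [sq_le_one_iff_abs_le_one, abs_mul, abs_of_pos (by positivity), one_div,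
      inv_mul_le_iff₀ hN, mul_one]
    exact hle
  calc (1 / N * (Q.det * pfs e (stdJ e))) ^ 2
      = Q.det ^ 2 * (1 / N * pfs e (stdJ e)) ^ 2 := by ring
    _ ≤ Q.det ^ 2 * 1 := mul_le_mul_of_nonneg_left h1 (sq_nonneg _)
    _ = Q.det ^ 2 := mul_one _

/-- The standard pairing of `Fin n` for even `n`. -/
def finPair {n : ℕ} (hn : Even n) : Fin (n / 2) × Fin 2 ≃ Fin n where
  toFun p := ⟨2 * p.1.val + p.2.val, by have := p.1.isLt; have := p.2.isLt; omega⟩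
  invFun x := (⟨x.val / 2, by have := x.isLt; have := Nat.even_iff.1 hn; omega⟩,
    ⟨x.val % 2, by omega⟩)
  left_inv p := by
    obtain ⟨⟨a, ha⟩, ⟨b, hb⟩⟩ := p
    simp only [Prod.mk.injEq, Fin.mk.injEq]
    omega
  right_inv x := by
    apply Fin.ext
    simp only
    omega

lemma pf_sq_le_det {n : ℕ} (hn : Even n)
    (B : Matrix (Fin n) (Fin n) ℝ) (hB : Bᵀ = -B) : (pf B) ^ 2 ≤ B.det := by
  have h := pfs_sq_le (finPair hn) B hB
  rw [Fintype.card_fin] at h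
  exact h

/-- For `A` diagonal with nonnegative entries and `B` real antisymmetric, of even size `n`,
`det (A + B) ≥ Pf(B)² ≥ 0`. -/
theorem det_diagonal_add_antisym_ge_pf_sq {n : ℕ} (hn : Even n)
    (a : Fin n → ℝ) (ha : ∀ i, 0 ≤ a i)
    (B : Matrix (Fin n) (Fin n) ℝ) (hB : Bᵀ = -B) :
    (pf B) ^ 2 ≤ (Matrix.diagonal a + B).det ∧
      0 ≤ (Matrix.diagonal a + B).det := by
  have h1 := pf_sq_le_det hn B hB
  have h2 := det_le_aux a ha B hB
  exact ⟨h1.trans h2, det_nonneg_aux a ha B hB⟩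
end
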